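/- There exists δ > 0 such that for all real u, v with |u|, |v| < δ, the series ∑_{k ≥ n+1, n ≥ 1} t^*(k−n+1, {1}^{n−1}) u^{k−n−1} v^{n−1} converges absolutely and equals (1/((1−u)(1−v))) · ₃F₂((1−u)/2, 1/2, 1; (3−u)/2, (3−v)/2; 1). -/

import Mathlib

open scoped BigOperators

/-- The multiple `t`-value of an index `K = (k₁, …, kₙ)` (a list of positive integers):
`t(K) = ∑_{m₁ > ⋯ > mₙ > 0, all mᵢ odd} 1 / (m₁^{k₁} ⋯ mₙ^{kₙ})`. -/
noncomputable def multT (K : List ℕ) : ℝ :=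
  ∑' m : Fin K.length → ℕ,
    if (∀ i, Odd (m i)) ∧ (∀ i j : Fin K.length, i < j → m j < m i) then
      ∏ i, ((m i : ℝ) ^ K.get i)⁻¹
    else 0

/-- The multiple `t`-star value of an index `K = (k₁, …, kₙ)`:
`t*(K) = ∑_{m₁ ≥ ⋯ ≥ mₙ > 0, all mᵢ odd} 1 / (m₁^{k₁} ⋯ mₙ^{kₙ})`. -/
noncomputable def multTStar (K : List ℕ) : ℝ :=
  ∑' m : Fin K.length → ℕ,
    if (∀ i, Odd (m i)) ∧ (∀ i j : Fin K.length, i < j → m j ≤ m i) then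
      ∏ i, ((m i : ℝ) ^ K.get i)⁻¹
    else 0

/-- An index (list of positive integers) is admissible if its first entry is `> 1`. -/
def Admissible (K : List ℕ) : Prop := (∀ i ∈ K, 1 ≤ i) ∧ 2 ≤ K.headI

instance : DecidablePred Admissible := fun K =>
  inferInstanceAs (Decidable ((∀ i ∈ K, 1 ≤ i) ∧ 2 ≤ K.headI))

/-- `G0h k n s` is the sum of multiple `t`-values over all admissible indices of
weight `k`, depth `n` and height `s`. -/
noncomputable def G0h (k n s : ℕ) : ℝ :=
  ∑' K : List ℕ,
    if Admissible K ∧ K.sum = k ∧ K.length = n ∧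
        K.countP (fun i => decide (2 ≤ i)) = s then
      multT K
    else 0

/-- `G0hStar k n s` is the sum of multiple `t`-star values over all admissible indices of
weight `k`, depth `n` and height `s`. -/
noncomputable def G0hStar (k n s : ℕ) : ℝ :=
  ∑' K : List ℕ,
    if Admissible K ∧ K.sum = k ∧ K.length = n ∧
        K.countP (fun i => decide (2 ≤ i)) = s then
      multTStar K
    else 0

/-- `G0d k n` is the sum of multiple `t`-values over all admissible indices of
weight `k` and depth `n`. -/
noncomputable def G0d (k n : ℕ) : ℝ :=
  ∑' K : List ℕ,
    if Admissible K ∧ K.sum = k ∧ K.length = n then multT K else 0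

/-- `G0dStar k n` is the sum of multiple `t`-star values over all admissible indices of
weight `k` and depth `n`. -/
noncomputable def G0dStar (k n : ℕ) : ℝ :=
  ∑' K : List ℕ,
    if Admissible K ∧ K.sum = k ∧ K.length = n then multTStar K else 0

/-- The single `t`-value `t(n) = ∑_{m odd, m > 0} 1 / m^n`. -/
noncomputable def tval (n : ℕ) : ℝ := ∑' m : ℕ, 1 / (2 * (m : ℝ) + 1) ^ n

/-- The ascending Pochhammer symbol `(a)ₙ = a (a+1) ⋯ (a+n-1)`. -/
noncomputable def poch (a : ℂ) (n : ℕ) : ℂ := ∏ i ∈ Finset.range n, (a + i)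

/-- The generalized hypergeometric function `₃F₂(a, b, c; d, e; z)`. -/
noncomputable def hyp3F2 (a b c d e z : ℂ) : ℂ :=
  ∑' n : ℕ, poch a n * poch b n * poch c n /
      ((n.factorial : ℂ) * poch d n * poch e n) * z ^ n

/-- The generalized hypergeometric function with upper parameters `as` and lower
parameters `bs`. -/
noncomputable def hypF (as bs : List ℂ) (z : ℂ) : ℂ :=
  ∑' n : ℕ, (as.map fun a => poch a n).prod /
      ((n.factorial : ℂ) * (bs.map fun b => poch b n).prod) * z ^ n

/-- The one-variable multiple polylogarithm
`L_K(z) = ∑_{m₁ > ⋯ > mₙ > 0, all mᵢ odd} z^{m₁} / (m₁^{k₁} ⋯ mₙ^{kₙ})`. -/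
noncomputable def Lt (K : List ℕ) (z : ℝ) : ℝ :=
  ∑' m : Fin K.length → ℕ,
    if h : (∀ i, Odd (m i)) ∧ (∀ i j : Fin K.length, i < j → m j < m i) ∧
        0 < K.length then
      z ^ (m ⟨0, h.2.2⟩) * ∏ i, ((m i : ℝ) ^ K.get i)⁻¹
    else 0

/-- The one-variable star multiple polylogarithm
`L*_K(z) = ∑_{m₁ ≥ ⋯ ≥ mₙ > 0, all mᵢ odd} z^{m₁} / (m₁^{k₁} ⋯ mₙ^{kₙ})`. -/
noncomputable def LtStar (K : List ℕ) (z : ℝ) : ℝ :=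
  ∑' m : Fin K.length → ℕ,
    if h : (∀ i, Odd (m i)) ∧ (∀ i j : Fin K.length, i < j → m j ≤ m i) ∧
        0 < K.length then
      z ^ (m ⟨0, h.2.2⟩) * ∏ i, ((m i : ℝ) ^ K.get i)⁻¹
    else 0

/-- `G0hz k n s z` is the sum of `L_K(z)` over all admissible indices `K` of
weight `k`, depth `n` and height `s`. -/
noncomputable def G0hz (k n s : ℕ) (z : ℝ) : ℝ :=
  ∑' K : List ℕ,
    if Admissible K ∧ K.sum = k ∧ K.length = n ∧
        K.countP (fun i => decide (2 ≤ i)) = s then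
      Lt K z
    else 0

/-- `G0hzStar k n s z` is the sum of `L*_K(z)` over all admissible indices `K` of
weight `k`, depth `n` and height `s`. -/
noncomputable def G0hzStar (k n s : ℕ) (z : ℝ) : ℝ :=
  ∑' K : List ℕ,
    if Admissible K ∧ K.sum = k ∧ K.length = n ∧
        K.countP (fun i => decide (2 ≤ i)) = s then
      LtStar K z
    else 0

open ENNReal in
noncomputable def GG (K : List ℕ) (M : ℕ) : ENNReal :=
  ∑' m : Fin K.length → ℕ,
    if ((∀ i, Odd (m i)) ∧ (∀ i j : Fin K.length, i < j → m j ≤ m i)) ∧ ∀ i, m i ≤ M then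
      ∏ i, ENNReal.ofReal ((m i : ℝ) ^ K.get i)⁻¹
    else 0

noncomputable def EE (K : List ℕ) : ENNReal :=
  ∑' m : Fin K.length → ℕ,
    if (∀ i, Odd (m i)) ∧ (∀ i j : Fin K.length, i < j → m j ≤ m i) then
      ∏ i, ENNReal.ofReal ((m i : ℝ) ^ K.get i)⁻¹
    else 0

noncomputable def HH : ℕ → ℕ → ℝ
  | 0, _ => 1
  | b + 1, n => ∑ j ∈ Finset.range n, (2 * (j : ℝ) + 1)⁻¹ * HH b (j + 1)

noncomputable def PP (v : ℝ) (n : ℕ) : ℝ :=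
  ∏ i ∈ Finset.range n, ((2 * (i : ℝ) + 1) / (2 * i + 1 - v))

lemma HH_nonneg (b n : ℕ) : 0 ≤ HH b n := by
  induction b generalizing n with
  | zero => simp [HH]
  | succ b ih =>
    simp only [HH]
    exact Finset.sum_nonneg fun j _ => mul_nonneg (by positivity) (ih _)

lemma multTStar_eq_EE (K : List ℕ) : multTStar K = (EE K).toReal := by
  unfold multTStar EE
  rw [ENNReal.tsum_toReal_eq]
  · congr 1
    ext m
    split_ifs
    · rw [ENNReal.toReal_prod]
      refine Finset.prod_congr rfl fun i _ => ?_
      rw [ENNReal.toReal_ofReal (by positivity)]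
    · simp
  · intro m
    split_ifs
    · exact ENNReal.prod_ne_top fun i _ => ENNReal.ofReal_ne_top
    · simp

lemma tsum_cons {n : ℕ} (f : (Fin (n + 1) → ℕ) → ENNReal) :
    ∑' m, f m = ∑' x : ℕ, ∑' m : Fin n → ℕ, f (Fin.cons x m) := by
  rw [← (Fin.consEquiv (fun _ : Fin (n+1) => ℕ)).tsum_eq, ENNReal.tsum_prod']
  rfl

lemma cond_cons {n : ℕ} (x : ℕ) (m : Fin n → ℕ) :
    ((∀ i, Odd ((Fin.cons x m : Fin (n+1) → ℕ) i)) ∧ (∀ i j : Fin (n+1), i < j →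
      (Fin.cons x m : Fin (n+1) → ℕ) j ≤ (Fin.cons x m : Fin (n+1) → ℕ) i)) ↔
    Odd x ∧ (((∀ i, Odd (m i)) ∧ (∀ i j : Fin n, i < j → m j ≤ m i)) ∧ ∀ i, m i ≤ x) := by
  simp only [Fin.forall_fin_succ, Fin.cons_zero, Fin.cons_succ, Fin.succ_lt_succ_iff,
    Fin.succ_pos, lt_irrefl, Fin.not_lt_zero, false_imp_iff, true_imp_iff, true_and]
  tauto

lemma EE_cons (a : ℕ) (K : List ℕ) :
    EE (a :: K) = ∑' x : ℕ, if Odd x then ENNReal.ofReal ((x : ℝ) ^ a)⁻¹ * GG K x else 0 := by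
  unfold EE GG
  refine (tsum_cons _).trans ?_
  congr 1
  ext x
  split_ifs with hx
  · rw [← ENNReal.tsum_mul_left]
    congr 1
    ext m
    have := cond_cons x m
    simp only [hx, true_and] at this
    rw [mul_ite, mul_zero]
    refine if_congr this ?_ rfl
    refine (Fin.prod_univ_succ _).trans ?_
    rfl
  · rw [ENNReal.tsum_eq_zero]
    intro m
    rw [if_neg]
    intro h
    exact hx ((cond_cons x m).1 h).1

lemma GG_cons (a : ℕ) (K : List ℕ) (M : ℕ) :
    GG (a :: K) M = ∑' x : ℕ, if Odd x ∧ x ≤ M then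
      ENNReal.ofReal ((x : ℝ) ^ a)⁻¹ * GG K x else 0 := by
  unfold GG
  refine (tsum_cons _).trans ?_
  congr 1
  ext x
  split_ifs with hx
  · rw [← ENNReal.tsum_mul_left]
    congr 1
    ext m
    rw [mul_ite, mul_zero]
    refine if_congr ?_ ?_ rfl
    · refine (and_congr_left' (cond_cons x m)).trans ?_
      constructor
      · rintro ⟨h, _⟩
        exact h.2
      · intro h
        refine ⟨⟨hx.1, h⟩, ?_⟩
        intro i
        refine Fin.cases ?_ ?_ i
        · exact hx.2
        · intro i
          exact (h.2 i).trans hx.2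
    · refine (Fin.prod_univ_succ _).trans ?_
      rfl
  · rw [ENNReal.tsum_eq_zero]
    intro m
    rw [if_neg]
    intro h
    exact hx ⟨((cond_cons x m).1 h.1).1, h.2 0⟩

lemma tsum_odd (f : ℕ → ENNReal) :
    ∑' x : ℕ, (if Odd x then f x else 0) = ∑' n : ℕ, f (2 * n + 1) := by
  have hinj : Function.Injective (fun n : ℕ => 2 * n + 1) := by
    intro a b h
    simp at h
    exact h
  rw [← hinj.tsum_eq (f := fun x => if Odd x then f x else 0)]
  · congr 1
    ext n
    rw [if_pos (odd_two_mul_add_one n)]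
  · intro x hx
    by_cases h : Odd x
    · obtain ⟨k, rfl⟩ := h
      exact ⟨k, rfl⟩
    · simp [h] at hx

lemma GG_eq (b N : ℕ) : GG (List.replicate b 1) (2 * N + 1) = ENNReal.ofReal (HH b (N + 1)) := by
  induction b generalizing N with
  | zero =>
    unfold GG
    simp only [List.replicate_zero]
    refine (tsum_eq_single (fun i => 0) ?_).trans ?_
    · intro m hm
      exact absurd (funext fun i => Fin.elim0 i) hm
    · rw [if_pos]
      · simp [HH]
      · refine ⟨⟨?_, ?_⟩, ?_⟩ <;> exact fun i => Fin.elim0 i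
  | succ b ih =>
    rw [List.replicate_succ, GG_cons]
    have : ∀ x : ℕ, (if Odd x ∧ x ≤ 2 * N + 1 then
      ENNReal.ofReal ((x : ℝ) ^ 1)⁻¹ * GG (List.replicate b 1) x else 0) =
      if Odd x then (if x ≤ 2 * N + 1 then
      ENNReal.ofReal ((x : ℝ) ^ 1)⁻¹ * GG (List.replicate b 1) x else 0) else 0 := by
      intro x
      rw [ite_and]
    simp only [this]
    rw [tsum_odd, tsum_eq_sum (s := Finset.range (N + 1))]
    · simp only [HH]
      rw [ENNReal.ofReal_sum_of_nonneg]
      · refine Finset.sum_congr rfl fun j hj => ?_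
        rw [Finset.mem_range] at hj
        rw [if_pos (by omega), ih, ENNReal.ofReal_mul (by positivity)]
        simp
      · intro j _
        exact mul_nonneg (by positivity) (HH_nonneg _ _)
    · intro j hj
      rw [Finset.mem_range] at hj
      rw [if_neg (by omega)]

lemma multTStar_eq (a b : ℕ) : multTStar (a :: List.replicate b 1) =
    ∑' N : ℕ, ((2 * (N : ℝ) + 1) ^ a)⁻¹ * HH b (N + 1) := by
  rw [multTStar_eq_EE, EE_cons, tsum_odd]
  simp only [GG_eq]
  rw [ENNReal.tsum_toReal_eq]
  · congr 1
    ext N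
    rw [ENNReal.toReal_mul, ENNReal.toReal_ofReal (by positivity),
      ENNReal.toReal_ofReal (HH_nonneg _ _)]
    push_cast
    rfl
  · intro N
    exact ENNReal.mul_ne_top ENNReal.ofReal_ne_top ENNReal.ofReal_ne_top

lemma HH_anti (b n : ℕ) : HH b (n + 1) =
    ∑ p ∈ Finset.HasAntidiagonal.antidiagonal b, (2 * (n : ℝ) + 1)⁻¹ ^ p.1 * HH p.2 n := by
  induction b with
  | zero => simp [HH]
  | succ b ih =>
    rw [Finset.Nat.sum_antidiagonal_succ]
    simp only [pow_succ', pow_zero, one_mul, mul_assoc]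
    rw [← Finset.mul_sum, ← ih]
    simp only [HH]
    rw [Finset.sum_range_succ]

lemma HH_hasSum (v : ℝ) (hv : |v| < 1 / 2) (n : ℕ) :
    HasSum (fun b => HH b n * v ^ b) (PP v n) ∧ Summable (fun b => HH b n * |v| ^ b) := by
  induction n with
  | zero =>
    have h0 : ∀ b, b ≠ 0 → HH b 0 = 0 := by
      intro b hb
      obtain ⟨c, rfl⟩ := Nat.exists_eq_succ_of_ne_zero hb
      simp [HH]
    have key : ∀ w : ℝ, HasSum (fun b => HH b 0 * w ^ b) 1 := by
      intro w
      have := hasSum_single (f := fun b => HH b 0 * w ^ b) 0 (by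
        intro b hb
        simp [h0 b hb])
      simpa [HH] using this
    exact ⟨by simpa [PP] using key v, (key _).summable⟩
  | succ n ih =>
    obtain ⟨h1, h2⟩ := ih
    set c : ℝ := (2 * (n : ℝ) + 1)⁻¹ with hc
    have hc0 : 0 < c := by positivity
    have hc1 : c ≤ 1 := by
      rw [hc]
      apply inv_le_one_of_one_le₀
      have : (0:ℝ) ≤ n := by positivity
      linarith
    have hlt : |c * v| < 1 := by
      rw [abs_mul, abs_of_pos hc0]
      nlinarith [abs_nonneg v]
    have hg := hasSum_geometric_of_abs_lt_one hlt
    have hgn : Summable (fun i => ‖(c * v) ^ i‖) := hg.summable.norm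
    have hhn : Summable (fun b => ‖HH b n * v ^ b‖) := h1.summable.norm
    have e : ∀ b, ∑ p ∈ Finset.HasAntidiagonal.antidiagonal b, (c * v) ^ p.1 * (HH p.2 n * v ^ p.2) =
        HH b (n + 1) * v ^ b := by
      intro b
      rw [HH_anti, Finset.sum_mul]
      refine Finset.sum_congr rfl fun p hp => ?_
      rw [Finset.HasAntidiagonal.mem_antidiagonal] at hp
      rw [← hp, pow_add, mul_pow]
      ring
    have hs := summable_norm_sum_mul_antidiagonal_of_summable_norm hgn hhn
    have ht := tsum_mul_tsum_eq_tsum_sum_antidiagonal_of_summable_norm hgn hhn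
    simp only [e] at hs ht
    constructor
    · have := hs.of_norm.hasSum
      rw [← ht, hg.tsum_eq, h1.tsum_eq] at this
      suffices hPP : PP v (n + 1) = (1 - c * v)⁻¹ * PP v n by
        rw [hPP]
        exact this
      rw [PP, Finset.prod_range_succ, ← PP, mul_comm]
      congr 1
      have hp : (0:ℝ) < 2 * n + 1 := by positivity
      rw [hc]
      have : (2 * (n:ℝ) + 1 - v) ≠ 0 := by
        have := (abs_lt.1 hv).2
        have : (0:ℝ) ≤ n := by positivity
        apply ne_of_gt
        linarith
      have h3 : 1 - (2 * (n:ℝ) + 1)⁻¹ * v = (2 * n + 1 - v) / (2 * n + 1) := by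
        field_simp
      rw [h3, inv_div]
    · refine hs.congr fun b => ?_
      rw [norm_mul, norm_pow, Real.norm_eq_abs, Real.norm_eq_abs, abs_of_nonneg (HH_nonneg _ _)]

lemma PP_bound (v : ℝ) (hv0 : 0 ≤ v) (hv : v < 1 / 2) (N : ℕ) :
    0 ≤ PP v (N + 1) ∧ PP v (N + 1) ^ 2 ≤ 4 * (N + 1) := by
  induction N with
  | zero =>
    have : 0 < 1 - v := by linarith
    have h2 : 1 / (1 - v) ≤ 2 := by
      rw [div_le_iff₀ this]
      linarith
    have h3 : 0 ≤ 1 / (1 - v) := by positivity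
    simp only [PP, zero_add, Finset.prod_range_one, Nat.cast_zero, mul_zero]
    refine ⟨h3, ?_⟩
    nlinarith
  | succ N ih =>
    obtain ⟨h1, h2⟩ := ih
    have hN : (0:ℝ) ≤ N := by positivity
    have e : PP v (N + 1 + 1) = PP v (N + 1) * ((2 * ((N + 1 : ℕ) : ℝ) + 1) / (2 * (N + 1 : ℕ) + 1 - v)) := by
      rw [PP, Finset.prod_range_succ, ← PP]
    rw [e]
    push_cast
    have hd : 0 < 2 * ((N:ℝ) + 1) + 1 - v := by linarith
    have hq0 : 0 ≤ (2 * ((N:ℝ) + 1) + 1) / (2 * (N + 1) + 1 - v) := by positivity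
    refine ⟨mul_nonneg h1 hq0, ?_⟩
    have hq : ((2 * ((N:ℝ) + 1) + 1) / (2 * (N + 1) + 1 - v)) ^ 2 * (N + 1) ≤ N + 1 + 1 := by
      have h5 : (2 * ((N:ℝ) + 1) + 1 - 1/2) ^ 2 ≤ (2 * ((N:ℝ) + 1) + 1 - v) ^ 2 := by
        apply pow_le_pow_left₀ <;> linarith
      rw [div_pow, div_mul_eq_mul_div, div_le_iff₀ (by positivity)]
      refine le_trans ?_ (mul_le_mul_of_nonneg_left h5 (by positivity))
      nlinarith [sq_nonneg (N:ℝ)]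
    rw [mul_pow]
    calc _ ≤ 4 * ((N:ℝ) + 1) * _ := mul_le_mul_of_nonneg_right h2 (by positivity)
      _ ≤ _ := by linarith

noncomputable def TT (u v : ℝ) (N : ℕ) : ℝ :=
  ((2 * (N : ℝ) + 1) * (2 * N + 1 - u))⁻¹ * PP v (N + 1)

lemma TT_summable (u v : ℝ) (hu0 : 0 ≤ u) (hu : u < 1 / 2) (hv0 : 0 ≤ v) (hv : v < 1 / 2) :
    Summable (TT u v) := by
  have hs : Summable (fun n : ℕ => 4 * (1 / ((n : ℝ) + 1) ^ (3 / 2 : ℝ))) := by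
    apply Summable.mul_left
    have := (summable_nat_add_iff 1).2 (Real.summable_one_div_nat_rpow.2 (by norm_num : (1:ℝ) < 3/2))
    simpa using this
  refine Summable.of_nonneg_of_le ?_ ?_ hs
  · intro N
    have hN : (0:ℝ) ≤ N := by positivity
    have : 0 < 2 * (N:ℝ) + 1 - u := by linarith
    exact mul_nonneg (by positivity) (PP_bound v hv0 hv N).1
  · intro N
    have hN : (0:ℝ) ≤ N := by positivity
    have h1 : 0 < 2 * (N:ℝ) + 1 - u := by linarith
    obtain ⟨hp, hq⟩ := PP_bound v hv0 hv N
    have hP : PP v (N + 1) ≤ 2 * Real.sqrt (N + 1) := by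
      apply (pow_le_pow_iff_left₀ hp (by positivity) two_ne_zero).1
      rw [mul_pow, Real.sq_sqrt (by positivity)]
      linarith
    have hr : ((N:ℝ) + 1) ^ (3 / 2 : ℝ) = (N + 1) * Real.sqrt (N + 1) := by
      rw [Real.sqrt_eq_rpow]
      nth_rewrite 2 [← Real.rpow_one ((N:ℝ) + 1)]
      rw [← Real.rpow_add (by positivity)]
      norm_num
    have hinv : ((2 * (N : ℝ) + 1) * (2 * N + 1 - u))⁻¹ ≤ 2 / ((N:ℝ) + 1) ^ 2 := by
      rw [inv_eq_one_div, div_le_div_iff₀ (by positivity) (by positivity)]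
      nlinarith
    unfold TT
    calc _ ≤ 2 / ((N:ℝ) + 1) ^ 2 * (2 * Real.sqrt (N + 1)) :=
          mul_le_mul hinv hP hp (by positivity)
      _ = _ := by
        rw [hr]
        have hs0 : 0 < Real.sqrt ((N:ℝ) + 1) := Real.sqrt_pos.2 (by positivity)
        have hs2 : Real.sqrt ((N:ℝ) + 1) ^ 2 = N + 1 := Real.sq_sqrt (by positivity)
        field_simp
        rw [hs2]
        ring

noncomputable def FF (u v : ℝ) (q : ℕ × ℕ × ℕ) : ℝ :=
  (u ^ q.2.1 * ((2 * (q.1 : ℝ) + 1) ^ (q.2.1 + 2))⁻¹) * (HH q.2.2 (q.1 + 1) * v ^ q.2.2)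

lemma FF_geo (u : ℝ) (hu : |u| < 1 / 2) (N : ℕ) :
    HasSum (fun a : ℕ => u ^ a * ((2 * (N : ℝ) + 1) ^ (a + 2))⁻¹)
      ((2 * (N : ℝ) + 1) * (2 * N + 1 - u))⁻¹ := by
  have hN : (0:ℝ) ≤ N := by positivity
  have hc : (0:ℝ) < 2 * N + 1 := by positivity
  have hd : 0 < 2 * (N:ℝ) + 1 - u := by linarith [(abs_lt.1 hu).2]
  have hlt : |u / (2 * N + 1)| < 1 := by
    rw [abs_div, abs_of_pos hc, div_lt_one hc]
    linarith
  have := (hasSum_geometric_of_abs_lt_one hlt).mul_left ((2 * (N:ℝ) + 1) ^ 2)⁻¹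
  have e1 : (fun a : ℕ => u ^ a * ((2 * (N : ℝ) + 1) ^ (a + 2))⁻¹) =
      fun i => ((2 * (N:ℝ) + 1) ^ 2)⁻¹ * (u / (2 * N + 1)) ^ i := by
    funext a
    rw [div_pow, pow_add]
    field_simp
  have e2 : ((2 * (N : ℝ) + 1) * (2 * N + 1 - u))⁻¹ =
      ((2 * (N:ℝ) + 1) ^ 2)⁻¹ * (1 - u / (2 * N + 1))⁻¹ := by
    have : 1 - u / (2 * (N:ℝ) + 1) = (2 * N + 1 - u) / (2 * N + 1) := by field_simp
    rw [this]
    field_simp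
  rw [e1, e2]
  exact this

lemma FF_fiber (u v : ℝ) (hu : |u| < 1 / 2) (hv : |v| < 1 / 2) (N : ℕ) :
    HasSum (fun p : ℕ × ℕ => FF u v (N, p)) (TT u v N) := by
  have h1 := FF_geo u hu N
  have h2 := (HH_hasSum v hv (N + 1)).1
  have h3 := summable_mul_of_summable_norm h1.summable.norm h2.summable.norm
  have h4 := h1.mul h2 h3
  simp only [FF, TT]
  exact h4

lemma FF_summable (u v : ℝ) (hu : |u| < 1 / 2) (hv : |v| < 1 / 2) : Summable (FF u v) := by
  have hu' : |(|u|)| < 1 / 2 := by rwa [abs_abs]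
  have hv' : |(|v|)| < 1 / 2 := by rwa [abs_abs]
  have : Summable (FF |u| |v|) := by
    rw [summable_prod_of_nonneg]
    · refine ⟨fun N => (FF_fiber _ _ hu' hv' N).summable, ?_⟩
      simp only [(FF_fiber _ _ hu' hv' _).tsum_eq]
      exact TT_summable _ _ (abs_nonneg _) hu (abs_nonneg _) hv
    · intro q
      have := HH_nonneg q.2.2 (q.1 + 1)
      simp only [FF, Pi.zero_apply]
      positivity
  refine Summable.of_norm (this.congr fun q => ?_)
  have h := HH_nonneg q.2.2 (q.1 + 1)
  have h2 : (0:ℝ) ≤ ((2 * (q.1 : ℝ) + 1) ^ (q.2.1 + 2))⁻¹ := by positivity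
  simp only [FF, norm_mul, norm_pow, Real.norm_eq_abs, abs_of_nonneg h, abs_of_nonneg h2]

lemma poch_succ (a : ℂ) (n : ℕ) : poch a (n + 1) = poch a n * (a + n) := by
  simp [poch, Finset.prod_range_succ]

lemma ne_aux (u : ℝ) (hu : |u| < 1 / 2) (n : ℕ) : (2 * (n:ℂ) + 1 - u) ≠ 0 := by
  have hN : (0:ℝ) ≤ n := by positivity
  have : 2 * (n:ℝ) + 1 - u ≠ 0 := by
    apply ne_of_gt
    linarith [(abs_lt.1 hu).2]
  exact_mod_cast this

lemma poch_one' (n : ℕ) : poch 1 n = n.factorial := by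
  induction n with
  | zero => simp [poch]
  | succ n ih =>
    rw [poch_succ, ih, Nat.factorial_succ]
    push_cast
    ring

lemma poch_ne (u : ℝ) (hu : |u| < 1 / 2) (n : ℕ) : poch ((3 - (u:ℂ)) / 2) n ≠ 0 := by
  rw [poch, Finset.prod_ne_zero_iff]
  intro i _ h
  apply ne_aux u hu (i + 1)
  push_cast
  linear_combination 2 * h

lemma poch_u (u : ℂ) (n : ℕ) :
    poch ((1 - u) / 2) n * (2 * n + 1 - u) = (1 - u) * poch ((3 - u) / 2) n := by
  induction n with
  | zero => simp [poch]
  | succ n ih =>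
    rw [poch_succ, poch_succ]
    push_cast
    linear_combination (2 * n + 3 - u) / 2 * ih

lemma poch_v (v : ℝ) (hv : |v| < 1 / 2) (n : ℕ) :
    poch (1 / 2) n * (2 * n + 1) = (PP v (n + 1) : ℂ) * (1 - v) * poch ((3 - (v:ℂ)) / 2) n := by
  induction n with
  | zero =>
    have := ne_aux v hv 0
    simp only [Nat.cast_zero, mul_zero, zero_add] at this
    simp [poch, PP]
    field_simp
  | succ n ih =>
    have h := ne_aux v hv (n + 1)
    have e : (PP v (n + 1 + 1) : ℂ) * (2 * ((n + 1 : ℕ) : ℂ) + 1 - v)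
        = PP v (n + 1) * (2 * ((n + 1 : ℕ) : ℂ) + 1) := by
      rw [PP, Finset.prod_range_succ, ← PP]
      push_cast at h ⊢
      field_simp
    rw [poch_succ, poch_succ]
    push_cast at e ⊢
    linear_combination (2 * (n:ℂ) + 3) / 2 * ih - (1 - v) * poch ((3 - (v:ℂ)) / 2) n / 2 * e

lemma term_eq (u v : ℝ) (hu : |u| < 1 / 2) (hv : |v| < 1 / 2) (n : ℕ) :
    ((1 - (u : ℂ)) * (1 - (v : ℂ)))⁻¹ * (poch ((1 - (u : ℂ)) / 2) n * poch (1 / 2) n * poch 1 n /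
      ((n.factorial : ℂ) * poch ((3 - (u : ℂ)) / 2) n * poch ((3 - (v : ℂ)) / 2) n) * 1 ^ n)
      = (TT u v n : ℂ) := by
  have h1 := ne_aux u hu n
  have h2 : (2 * (n:ℂ) + 1) ≠ 0 := by simpa using ne_aux 0 (by norm_num) n
  have h3 : (1 - (u:ℂ)) ≠ 0 := by simpa using ne_aux u hu 0
  have h4 : (1 - (v:ℂ)) ≠ 0 := by simpa using ne_aux v hv 0
  have h5 := poch_ne u hu n
  have h6 := poch_ne v hv n
  have h7 : (n.factorial : ℂ) ≠ 0 := by exact_mod_cast n.factorial_ne_zero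
  have e1 : poch ((1 - (u : ℂ)) / 2) n = (1 - u) * poch ((3 - (u:ℂ)) / 2) n / (2 * n + 1 - u) := by
    rw [eq_div_iff h1]
    exact poch_u u n
  have e2 : poch (1 / 2) n =
      (PP v (n + 1) : ℂ) * (1 - v) * poch ((3 - (v:ℂ)) / 2) n / (2 * n + 1) := by
    rw [eq_div_iff h2]
    exact poch_v v hv n
  rw [poch_one', e1, e2, TT, one_pow]
  push_cast
  field_simp

/-- Generating function of height-one multiple `t`-star values (Corollary 2.2). -/
theorem height_one_multiple_t_star :
    ∃ δ > (0 : ℝ), ∀ u v : ℝ, |u| < δ → |v| < δ →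
      Summable (fun p : ℕ × ℕ =>
        multTStar ((p.1 + 2) :: List.replicate p.2 1) * u ^ p.1 * v ^ p.2) ∧
      ((∑' p : ℕ × ℕ,
          multTStar ((p.1 + 2) :: List.replicate p.2 1) * u ^ p.1 * v ^ p.2 : ℝ) : ℂ)
        = ((1 - (u : ℂ)) * (1 - (v : ℂ)))⁻¹ *
            hyp3F2 ((1 - (u : ℂ)) / 2) (1 / 2) 1
              ((3 - (u : ℂ)) / 2) ((3 - (v : ℂ)) / 2) 1 := by
  refine ⟨1 / 2, by norm_num, fun u v hu hv => ?_⟩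
  have hF := FF_summable u v hu hv
  have hF2 : Summable (fun q : (ℕ × ℕ) × ℕ => FF u v (q.2, q.1)) := by
    have := (Equiv.prodComm (ℕ × ℕ) ℕ).summable_iff.2 hF
    exact this
  have e : ∀ p : ℕ × ℕ, multTStar ((p.1 + 2) :: List.replicate p.2 1) * u ^ p.1 * v ^ p.2
      = ∑' N, FF u v (N, p) := by
    intro p
    rw [multTStar_eq, ← tsum_mul_right, ← tsum_mul_right]
    congr 1
    ext N
    simp only [FF]
    ring
  simp only [e]
  refine ⟨hF2.prod, ?_⟩
  have h1 : ∑' p : ℕ × ℕ, ∑' N, FF u v (N, p) = ∑' N, TT u v N := by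
    rw [← hF2.tsum_prod]
    have h2 := (Equiv.prodComm (ℕ × ℕ) ℕ).tsum_eq (FF u v)
    refine (h2.trans hF.tsum_prod).trans ?_
    congr 1
    ext N
    exact (FF_fiber u v hu hv N).tsum_eq
  rw [h1, hyp3F2, ← tsum_mul_left, Complex.ofReal_tsum]
  congr 1
  ext n
  exact (term_eq u v hu hv n).symm
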